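/- arXiv:1111.4047 — 3 statements merged into one kernel-verified Lean document; each statement's English description precedes it below -/
import Mathlib

section
/- (β-extended MacMahon Master Theorem) For an n×n matrix A (e.g., with entries that are formal variables or in a neighborhood where the series converges), Σ_{r} (1/r!) perm_β A(n^r, n^r) = det(I - A)^{-β}, where the sum is over all n-tuples r = (r_1,...,r_n) of non-negative integers, r! = r_1!···r_n!, and A(n^r,n^r) is the N×N matrix (N = Σ r_i) obtained by repeating row/column index i exactly r_i times, with the convention A(n^0,n^0) = 1. -/
open scoped Classical

noncomputable section

/-- Number of cycles of a permutation, counting fixed points as 1-cycles. -/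
def cycleCount {α : Type*} [Fintype α] [DecidableEq α] (π : Equiv.Perm α) : ℕ :=
  (Finset.univ.filter fun x => π x = x).card + π.cycleType.card

/-- The β-extended permanent of a matrix. -/
def permB {α : Type*} [Fintype α] [DecidableEq α] {R : Type*} [CommRing R]
    (β : R) (M : Matrix α α R) : R :=
  ∑ π : Equiv.Perm α, β ^ cycleCount π * ∏ i, M i (π i)

/-- The matrix `A(n^r, n^r)` indexed by the multiset in which index `i` is
repeated `r i` times: entries depend only on the underlying labels. -/
def repA {n : ℕ} {R : Type*} (A : Matrix (Fin n) (Fin n) R) (r : Fin n → ℕ) :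
    Matrix ((i : Fin n) × Fin (r i)) ((i : Fin n) × Fin (r i)) R :=
  fun k l => A k.1 l.1

/-!
Write `c_N` for the part of degree `N` of the series. It is `1 / N!` times the sum of
`perm_β A(f, f)` over all labelings `f` of `N` points by indices, because exactly `N! / r!`
labelings have multiplicities `r`. Mark one of the points and delete it from its cycle. If it is a
fixed point, it contributes a factor `β tr B`, where `B` is the matrix giving its row; otherwise its
predecessor becomes the marked point, with row taken from `A * B`. Iterating from `B = A` yields
`(N + 1) c_{N+1} = β ∑_{i+j=N} tr(A ^ (i+1)) c_j`.

The recursion bounds the growth of the `c_N` and says that `G(t) = ∑ c_N t ^ N` satisfies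
`G' = β tr((1 - tA)⁻¹ A) G`. By Jacobi's formula `D(t) = det(1 - tA)` satisfies
`D' = -tr((1 - tA)⁻¹ A) D`, so `G D ^ β` is constant on `[0, 1]`, with value `1` at `t = 0`.
-/

open Equiv Equiv.Perm Finset

section CycleCount

variable {α γ : Type*} [Fintype α] [DecidableEq α] [Fintype γ] [DecidableEq γ]

theorem cycleCount_add_card_support (π : Perm α) :
    cycleCount π + #π.support = Fintype.card α + Multiset.card π.cycleType := by
  have h : #{x | π x = x} + #{x | ¬π x = x} = #(univ : Finset α) :=
    card_filter_add_card_filter_not _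
  rw [cycleCount, add_right_comm, ← card_univ, ← h]
  rfl

theorem cycleCount_extendDomain {p : γ → Prop} [DecidablePred p] (f : α ≃ Subtype p)
    (π : Perm α) :
    cycleCount (π.extendDomain f) + Fintype.card α = cycleCount π + Fintype.card γ := by
  have hπ := cycleCount_add_card_support π
  have hext := cycleCount_add_card_support (π.extendDomain f)
  rw [card_support_extend_domain, cycleType_extendDomain] at hext
  omega

theorem cycleCount_permCongr (e : α ≃ γ) (π : Perm α) :
    cycleCount (e.permCongr π) = cycleCount π := by
  let f : α ≃ {_c : γ // True} := e.trans (Equiv.subtypeUnivEquiv fun _ => trivial).symm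
  have hf : e.permCongr π = π.extendDomain f :=
    Equiv.ext fun c => (extendDomain_apply_subtype π f (b := c) trivial).symm
  have h := cycleCount_extendDomain f π
  rw [← hf, Fintype.card_congr e] at h
  exact Nat.add_right_cancel h

theorem cycleCount_optionCongr (σ : Perm α) : cycleCount σ.optionCongr = cycleCount σ + 1 := by
  let f : α ≃ {x : Option α // x.isSome} := (optionIsSomeEquiv α).symm
  have hf : σ.optionCongr = σ.extendDomain f := by
    ext1 x
    cases x with
    | none => exact (extendDomain_apply_not_subtype σ f (by simp)).symm
    | some a => exact (extendDomain_apply_image σ f a).symm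
  have h := cycleCount_extendDomain f σ
  rw [← hf, Fintype.card_option] at h
  omega

theorem cycleCount_mul_add_card {σ τ : Perm α} (h : Perm.Disjoint σ τ) :
    cycleCount (σ * τ) + Fintype.card α = cycleCount σ + cycleCount τ := by
  have hσ := cycleCount_add_card_support σ
  have hτ := cycleCount_add_card_support τ
  have hστ := cycleCount_add_card_support (σ * τ)
  rw [h.cycleType_mul, h.card_support_mul, Multiset.card_add] at hστ
  omega

theorem cycleCount_add_card_support_of_isCycle {c : Perm α} (hc : c.IsCycle) :
    cycleCount c + #c.support = Fintype.card α + 1 := by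
  rw [cycleCount_add_card_support, hc.cycleType, Multiset.card_singleton]

theorem cycleCount_one : cycleCount (1 : Perm α) = Fintype.card α := by
  simpa using cycleCount_add_card_support (1 : Perm α)

theorem cycleCount_swap_mul_of_isCycle {c : Perm α} (hc : c.IsCycle) {x : α} (hx : c x ≠ x) :
    cycleCount (swap x (c x) * c) = cycleCount c + 1 := by
  have h := cycleCount_add_card_support_of_isCycle hc
  by_cases hcx : c (c x) = x
  · have hc_swap : c = swap x (c x) := hc.eq_swap_of_apply_apply_eq_self hx hcx
    have hswap : swap x (c x) * c = 1 :=
      (congrArg (swap x (c x) * ·) hc_swap).trans (swap_mul_self _ _)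
    rw [card_support_eq_two.2 ⟨x, c x, hx.symm, hc_swap⟩] at h
    rw [hswap, cycleCount_one]
    omega
  · have hswap := cycleCount_add_card_support_of_isCycle (hc.swap_mul hx hcx)
    rw [support_swap_mul_eq c x hcx, card_sdiff_of_subset (by simpa using hx),
      card_singleton] at hswap
    have := hc.two_le_card_support
    omega

theorem cycleCount_swap_mul (π : Perm α) {x : α} (hx : π x ≠ x) :
    cycleCount (swap x (π x) * π) = cycleCount π + 1 := by
  let c := π.cycleOf x
  have hc : c.IsCycle := isCycle_cycleOf π hx
  have hcx : c x = π x := cycleOf_apply_self π x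
  have hdisj : Perm.Disjoint c (π * c⁻¹) :=
    (disjoint_mul_inv_of_mem_cycleFactorsFinset
      (cycleOf_mem_cycleFactorsFinset_iff.2 (mem_support.2 hx))).symm
  have hdisj' : Perm.Disjoint (swap x (c x) * c) (π * c⁻¹) := hdisj.mono
    (fun y hy => (mem_support_swap_mul_imp_mem_support_ne hy).1) le_rfl
  have hmul : c * (π * c⁻¹) = π := by rw [hdisj.commute.eq, inv_mul_cancel_right]
  have hswap := cycleCount_mul_add_card hdisj'
  rw [mul_assoc, hmul, hcx, ← hcx, cycleCount_swap_mul_of_isCycle hc (hcx ▸ hx), hcx] at hswap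
  have h := cycleCount_mul_add_card hdisj
  rw [hmul] at h
  omega

theorem cycleCount_swap_none_mul_optionCongr (σ : Perm α) (b : α) :
    cycleCount (swap none (some b) * σ.optionCongr) = cycleCount σ := by
  have h := cycleCount_swap_mul (swap none (some b) * σ.optionCongr) (x := none) (by simp)
  simp only [Perm.coe_mul, Function.comp_apply, optionCongr_apply, Option.map_none,
    swap_apply_left, swap_mul_self_mul] at h
  rw [cycleCount_optionCongr] at h
  omega

end CycleCount

section PermB

variable {α γ R : Type*} [Fintype α] [DecidableEq α] [Fintype γ] [DecidableEq γ] [CommRing R]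

theorem permB_submatrix_equiv (e : α ≃ γ) (β : R) (M : Matrix γ γ R) :
    permB β (M.submatrix e e) = permB β M := by
  refine Fintype.sum_equiv e.permCongr _ _ fun π => ?_
  rw [cycleCount_permCongr]
  congr 1
  exact Fintype.prod_equiv e _ _ fun i => by simp

theorem permB_of_isEmpty [IsEmpty α] (β : R) (M : Matrix α α R) : permB β M = 1 := by
  simp [permB, cycleCount_one]

theorem permB_smul (β c : R) (M : Matrix α α R) :
    permB β (c • M) = c ^ Fintype.card α * permB β M := by
  simp only [permB, Matrix.smul_apply, smul_eq_mul, prod_mul_distrib, prod_const, mul_sum,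
    Finset.card_univ]
  exact sum_congr rfl fun _ _ => by ring

theorem prod_updateRow_apply (M : Matrix α α R) (k : α) (v : α → R) (π : Perm α) :
    ∏ i, M.updateRow k v i (π i) = v (π k) * ∏ i ∈ univ.erase k, M i (π i) := by
  rw [← mul_prod_erase _ _ (mem_univ k), Matrix.updateRow_self]
  congr 1
  exact prod_congr rfl fun i hi => by rw [Matrix.updateRow_ne (ne_of_mem_erase hi)]

theorem isLinearMap_permB_updateRow (β : R) (M : Matrix α α R) (k : α) :
    IsLinearMap R fun v => permB β (M.updateRow k v) where
  map_add v w := by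
    simp only [permB, prod_updateRow_apply, Pi.add_apply, add_mul, mul_add, sum_add_distrib]
  map_smul c v := by
    simp only [permB, prod_updateRow_apply, Pi.smul_apply, smul_eq_mul, mul_sum]
    exact sum_congr rfl fun _ _ => by ring

theorem prod_swap_none_mul_optionCongr (M : Matrix (Option α) (Option α) R) (σ : Perm α) (k : α) :
    ∏ o, M o ((swap none (some (σ k)) * σ.optionCongr) o) =
      ∏ i, (M.submatrix some some).updateRow k
        (fun j => M (some k) none * M none (some j)) i (σ i) := by
  have hne {i : α} (hi : i ∈ univ.erase k) :
      (swap none (some (σ k)) * σ.optionCongr) (some i) = some (σ i) := by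
    have hik : σ i ≠ σ k := σ.injective.ne (ne_of_mem_erase hi)
    exact swap_apply_of_ne_of_ne (Option.some_ne_none _) (Option.some_injective _ |>.ne hik)
  rw [prod_updateRow_apply, Fintype.prod_option, ← mul_prod_erase _ _ (mem_univ k),
    prod_congr rfl fun i hi => by rw [hne hi]]
  simp only [Perm.coe_mul, Function.comp_apply, optionCongr_apply, Option.map_none,
    Option.map_some, swap_apply_left, swap_apply_right, Matrix.submatrix_apply]
  ring

-- Deleting `none` from its cycle merges its row into the row of its predecessor `some k`.
theorem permB_option (β : R) (M : Matrix (Option α) (Option α) R) :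
    permB β M = β * M none none * permB β (M.submatrix some some) +
      ∑ k, permB β ((M.submatrix some some).updateRow k
        fun j => M (some k) none * M none (some j)) := by
  have hfix (σ : Perm α) : decomposeOption.symm (none, σ) = σ.optionCongr :=
    Equiv.ext (decomposeOption_symm_of_none_apply σ)
  have hins (σ : Perm α) (k : α) : decomposeOption.symm (some (σ k), σ) =
      swap none (some (σ k)) * σ.optionCongr := by simp
  simp only [permB]
  rw [← decomposeOption.symm.sum_comp, Fintype.sum_prod_type, Fintype.sum_option]
  congr 1
  · simp only [hfix, mul_sum, cycleCount_optionCongr, Fintype.prod_option, optionCongr_apply,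
      Option.map_none, Option.map_some, Matrix.submatrix_apply]
    exact sum_congr rfl fun _ _ => by ring
  · rw [sum_comm, sum_comm (s := univ (α := α))]
    refine sum_congr rfl fun σ _ => ?_
    rw [← Equiv.sum_comp σ]
    simp only [hins, cycleCount_swap_none_mul_optionCongr, prod_swap_none_mul_optionCongr]

theorem abs_permB_le (β : ℝ) (M : Matrix α α ℝ) : |permB β M| ≤ permB |β| (M.map abs) := by
  refine (abs_sum_le_sum_abs _ _).trans_eq (sum_congr rfl fun π _ => ?_)
  simp only [abs_mul, abs_pow, abs_prod, Matrix.map_apply]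

end PermB

section LabelSum

variable {ι α γ R : Type*} [Fintype ι] [Fintype α] [DecidableEq α] [Fintype γ] [DecidableEq γ]
  [CommRing R]

/-- The sum of the `β`-extended permanents `perm_β A(f, f)` over all labelings `f` of `α` by
indices of `A`. -/
def labelSum (β : R) (A : Matrix ι ι R) (α : Type*) [Fintype α] [DecidableEq α] : R :=
  ∑ f : α → ι, permB β (A.submatrix f f)

/-- The variant of `labelSum` in which the row of the marked element `a : α` takes its entries
from `B` instead of `A`. -/
def markedLabelSum (β : R) (A B : Matrix ι ι R) (a : α) : R :=
  ∑ f : α → ι, permB β ((A.submatrix f f).updateRow a fun j => B (f a) (f j))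

theorem markedLabelSum_self (β : R) (A : Matrix ι ι R) (a : α) :
    markedLabelSum β A A a = labelSum β A α := by
  refine sum_congr rfl fun f _ => congrArg (permB β) ?_
  exact Matrix.updateRow_eq_self _ _

theorem markedLabelSum_map_equiv (e : α ≃ γ) (β : R) (A B : Matrix ι ι R) (a : α) :
    markedLabelSum β A B (e a) = markedLabelSum β A B a := by
  refine (Fintype.sum_equiv (e.arrowCongr (Equiv.refl ι)) _ _ fun f => ?_).symm
  rw [← permB_submatrix_equiv e, Matrix.submatrix_updateRow_equiv]
  simp [Function.comp_def]

theorem sum_permB_option_elim (β : R) (A B : Matrix ι ι R) (g : α → ι) :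
    ∑ x, permB β ((A.submatrix (Option.elim · x g) (Option.elim · x g)).updateRow none
        fun j => B x (j.elim x g)) =
      β * B.trace * permB β (A.submatrix g g) +
        ∑ k, permB β ((A.submatrix g g).updateRow k fun j => (A * B) (g k) (g j)) := by
  have hsub (x : ι) : ((A.submatrix (Option.elim · x g) (Option.elim · x g)).updateRow none
        fun j => B x (j.elim x g)).submatrix some some = A.submatrix g g := by
    ext; rfl
  have hrow (k : α) : permB β ((A.submatrix g g).updateRow k fun j => (A * B) (g k) (g j)) =
      ∑ x, permB β ((A.submatrix g g).updateRow k fun j => A (g k) x * B x (g j)) := by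
    have h := map_sum (isLinearMap_permB_updateRow β (A.submatrix g g) k).mk'
      (fun x j => A (g k) x * B x (g j)) univ
    simp only [IsLinearMap.mk'_apply] at h
    rw [← h]
    congr 2
    ext j
    simp [Matrix.mul_apply]
  simp only [permB_option, hsub, hrow, Matrix.updateRow_self, sum_add_distrib]
  congr 1
  · simp [Matrix.trace, mul_sum, sum_mul]
  · exact sum_comm

theorem sum_option_fun {X : Type*} [AddCommMonoid X] (F : (Option α → ι) → X) :
    ∑ f, F f = ∑ g : α → ι, ∑ x, F (Option.elim · x g) := by
  rw [← (piOptionEquivProd (β := fun _ : Option α => ι)).symm.sum_comp, Fintype.sum_prod_type,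
    sum_comm]
  refine sum_congr rfl fun g _ => sum_congr rfl fun x _ => congrArg F (funext ?_)
  rintro (_ | _) <;> rfl

theorem markedLabelSum_none (β : R) (A B : Matrix ι ι R) :
    markedLabelSum β A B (none : Option α) =
      β * B.trace * labelSum β A α + ∑ k : α, markedLabelSum β A (A * B) k := by
  simp only [markedLabelSum, labelSum]
  rw [sum_comm, mul_sum, ← sum_add_distrib, sum_option_fun]
  exact sum_congr rfl fun g _ => sum_permB_option_elim β A B g

end LabelSum

section Coeff

open Nat

variable {ι K : Type*} [Fintype ι] [Field K]

/-- The total of the terms of degree `N` in `A` of the series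
`∑ r, (1 / r!) perm_β A(n ^ r, n ^ r)`, written as a sum over labelings of `N` points instead of
multiplicities `r`. -/
def permBCoeff (β : K) (A : Matrix ι ι K) (N : ℕ) : K :=
  labelSum β A (Fin N) / N !

theorem permBCoeff_zero (β : K) (A : Matrix ι ι K) : permBCoeff β A 0 = 1 := by
  simp [permBCoeff, labelSum, permB_of_isEmpty]

theorem permBCoeff_smul (β t : K) (A : Matrix ι ι K) (N : ℕ) :
    permBCoeff β (t • A) N = permBCoeff β A N * t ^ N := by
  have hsub (f : Fin N → ι) : (t • A).submatrix f f = t • A.submatrix f f := rfl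
  simp only [permBCoeff, labelSum, hsub, permB_smul, Fintype.card_fin, ← mul_sum]
  ring

theorem factorial_mul_permBCoeff [CharZero K] (β : K) (A : Matrix ι ι K) (N : ℕ) :
    N ! * permBCoeff β A N = labelSum β A (Fin N) :=
  mul_div_cancel₀ _ (cast_ne_zero.2 N.factorial_ne_zero)

variable [CharZero K] [DecidableEq ι]

theorem markedLabelSum_none_fin (β : K) (A B : Matrix ι ι K) (N : ℕ) :
    markedLabelSum β A B (none : Option (Fin N)) =
      N ! * (β * ∑ p ∈ antidiagonal N, (A ^ p.1 * B).trace * permBCoeff β A p.2) := by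
  induction N generalizing B with
  | zero => simp [markedLabelSum_none, ← factorial_mul_permBCoeff, mul_assoc]
  | succ N ih =>
    have hmark (k : Fin (N + 1)) : markedLabelSum β A (A * B) k =
        markedLabelSum β A (A * B) (none : Option (Fin N)) := by
      rw [← markedLabelSum_map_equiv (finSuccEquiv' k), finSuccEquiv'_at]
    simp only [markedLabelSum_none, hmark, ih, ← factorial_mul_permBCoeff, sum_const,
      Finset.card_univ, Fintype.card_fin, nsmul_eq_mul, Finset.Nat.sum_antidiagonal_succ, pow_zero,
      one_mul, pow_succ, mul_assoc, factorial_succ, cast_mul]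
    ring

theorem succ_mul_permBCoeff_succ (β : K) (A : Matrix ι ι K) (N : ℕ) :
    (N + 1) * permBCoeff β A (N + 1) =
      β * ∑ p ∈ antidiagonal N, (A ^ (p.1 + 1)).trace * permBCoeff β A p.2 := by
  have h : (N ! : K) ≠ 0 := cast_ne_zero.2 N.factorial_ne_zero
  apply mul_left_cancel₀ h
  simp only [pow_succ]
  rw [← markedLabelSum_none_fin, ← finSuccEquiv'_at 0, markedLabelSum_map_equiv,
    markedLabelSum_self, ← factorial_mul_permBCoeff, factorial_succ]
  push_cast
  ring

theorem succ_mul_permBCoeff_succ_mul_pow (β t : K) (A : Matrix ι ι K) (N : ℕ) :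
    (N + 1) * permBCoeff β A (N + 1) * t ^ N =
      β * ∑ p ∈ antidiagonal N, ((t • A) ^ p.1 * A).trace * permBCoeff β (t • A) p.2 := by
  rw [succ_mul_permBCoeff_succ, mul_assoc, sum_mul]
  refine congrArg (β * ·) (sum_congr rfl fun p hp => ?_)
  rw [← mem_antidiagonal.1 hp, permBCoeff_smul, smul_pow, smul_mul_assoc, Matrix.trace_smul,
    smul_eq_mul, pow_succ]
  ring

end Coeff

section Bound

open scoped Matrix.Norms.Operator

variable {ι : Type*} [Fintype ι] [DecidableEq ι]

theorem norm_map_abs (A : Matrix ι ι ℝ) : ‖A.map abs‖ = ‖A‖ := by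
  simp [Matrix.linfty_opNorm_def]

theorem norm_apply_le_linfty_opNorm (A : Matrix ι ι ℝ) (i j : ι) : ‖A i j‖ ≤ ‖A‖ := by
  rw [Matrix.linfty_opNorm_def, ← coe_nnnorm, NNReal.coe_le_coe]
  exact (single_le_sum_of_canonicallyOrdered (f := fun j => ‖A i j‖₊) (mem_univ j)).trans
    (le_sup (f := fun i => ∑ j, ‖A i j‖₊) (mem_univ i))

theorem norm_trace_le (A : Matrix ι ι ℝ) : ‖A.trace‖ ≤ Fintype.card ι * ‖A‖ := by
  rw [← nsmul_eq_mul, ← Finset.card_univ]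
  exact norm_sum_le_of_le _ (fun i _ => norm_apply_le_linfty_opNorm A i i) |>.trans_eq (sum_const _)

theorem linfty_opNorm_lt_one_of_forall_lt {A : Matrix ι ι ℝ}
    (hA : ∀ i j, |A i j| < 1 / (Fintype.card ι + 1)) : ‖A‖ < 1 := by
  have hrow (i : ι) : ∑ j, |A i j| < 1 := calc
    _ ≤ ∑ _j : ι, 1 / (Fintype.card ι + 1 : ℝ) := sum_le_sum fun j _ => (hA i j).le
    _ = Fintype.card ι / (Fintype.card ι + 1) := by simp [div_eq_mul_inv]
    _ < 1 := by rw [div_lt_one (by positivity)]; exact lt_add_one _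
  rw [Matrix.linfty_opNorm_def, ← NNReal.coe_one, NNReal.coe_lt_coe, Finset.sup_lt_iff one_pos]
  exact fun i _ => by simpa [← NNReal.coe_lt_coe] using hrow i

theorem norm_trace_pow_succ_le (A : Matrix ι ι ℝ) (k : ℕ) :
    ‖(A ^ (k + 1)).trace‖ ≤ Fintype.card ι * ‖A‖ ^ (k + 1) :=
  (norm_trace_le _).trans
    (mul_le_mul_of_nonneg_left (norm_pow_le' A k.succ_pos) (Nat.cast_nonneg _))

theorem succ_mul_succ_add_choose (N d : ℕ) :
    (N + 1) * (N + 1 + d).choose d = (d + 1) * ∑ p ∈ antidiagonal N, (p.2 + d).choose d := by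
  have hockey_stick : ∑ p ∈ antidiagonal N, (p.2 + d).choose d = (N + 1 + d).choose (d + 1) := by
    rw [Nat.add_right_comm, ← Nat.sum_range_add_choose, ← Finset.Nat.sum_antidiagonal_swap]
    exact Finset.Nat.sum_antidiagonal_eq_sum_range_succ_mk (fun p => (p.1 + d).choose d) N
  have h := Nat.choose_succ_right_eq (N + 1 + d) d
  rw [Nat.add_sub_cancel] at h
  rw [hockey_stick, mul_comm, ← h, mul_comm]

-- The right-hand side is the coefficient of `x ^ N` in `(1 - ‖A‖ x) ^ (-(d + 1))`.
theorem norm_permBCoeff_le {β : ℝ} {d : ℕ} (hd : |β| * Fintype.card ι ≤ d) (A : Matrix ι ι ℝ)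
    (N : ℕ) : ‖permBCoeff β A N‖ ≤ (N + d).choose d * ‖A‖ ^ N := by
  induction N using Nat.strong_induction_on with
  | h N ih =>
  cases N with
  | zero => simp [permBCoeff_zero]
  | succ N =>
    have hterm (p : ℕ × ℕ) (hp : p ∈ antidiagonal N) :
        ‖(A ^ (p.1 + 1)).trace * permBCoeff β A p.2‖ ≤
          Fintype.card ι * ‖A‖ ^ (N + 1) * (p.2 + d).choose d := by
      have hpN := mem_antidiagonal.1 hp
      calc ‖(A ^ (p.1 + 1)).trace * permBCoeff β A p.2‖
        _ ≤ (Fintype.card ι * ‖A‖ ^ (p.1 + 1)) * ((p.2 + d).choose d * ‖A‖ ^ p.2) := by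
          rw [norm_mul]
          gcongr
          exacts [norm_trace_pow_succ_le A _, ih _ (by omega)]
        _ = _ := by rw [← hpN]; ring
    refine le_of_mul_le_mul_left ?_ (N.cast_add_one_pos (α := ℝ))
    calc ((N : ℝ) + 1) * ‖permBCoeff β A (N + 1)‖
      _ = |β| * ‖∑ p ∈ antidiagonal N, (A ^ (p.1 + 1)).trace * permBCoeff β A p.2‖ := by
        rw [← Real.norm_eq_abs, ← norm_mul, ← succ_mul_permBCoeff_succ, norm_mul]
        congr 1
        exact (Real.norm_of_nonneg N.cast_add_one_pos.le).symm
      _ ≤ |β| * (Fintype.card ι * ‖A‖ ^ (N + 1) *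
          ∑ p ∈ antidiagonal N, ((p.2 + d).choose d : ℝ)) := by
        gcongr
        exact (norm_sum_le_of_le _ hterm).trans_eq (mul_sum _ _ _).symm
      _ = |β| * Fintype.card ι *
          (‖A‖ ^ (N + 1) * ∑ p ∈ antidiagonal N, ((p.2 + d).choose d : ℝ)) := by ring
      _ ≤ (d + 1) * (‖A‖ ^ (N + 1) * ∑ p ∈ antidiagonal N, ((p.2 + d).choose d : ℝ)) := by
        gcongr
        linarith
      _ = (N + 1) * ((N + 1 + d).choose d * ‖A‖ ^ (N + 1)) := by
        have h := congrArg (Nat.cast : ℕ → ℝ) (succ_mul_succ_add_choose N d)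
        push_cast at h
        linear_combination -‖A‖ ^ (N + 1) * h

end Bound

theorem hasDerivAt_tsum_mul_pow {𝕜 : Type*} [RCLike 𝕜] {a : ℕ → 𝕜} {r t : 𝕜}
    (ha : Summable fun N : ℕ => ‖(N + 1) * a (N + 1) * r ^ N‖) (ht : ‖t‖ < ‖r‖) :
    HasDerivAt (fun s => ∑' N, a N * s ^ N) (∑' N : ℕ, (N + 1) * a (N + 1) * t ^ N) t := by
  have hderiv (N : ℕ) (s : 𝕜) : HasDerivAt (fun s => a N * s ^ N) (N * a N * s ^ (N - 1)) s :=
    ((hasDerivAt_pow N s).const_mul (a N)).congr_deriv (by ring)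
  have hbound (N : ℕ) (s : 𝕜) (hs : s ∈ Metric.ball 0 ‖r‖) :
      ‖N * a N * s ^ (N - 1)‖ ≤ ‖N * a N * r ^ (N - 1)‖ := by
    rw [norm_mul _ (s ^ _), norm_mul _ (r ^ _), norm_pow, norm_pow]
    gcongr
    exact (mem_ball_zero_iff.1 hs).le
  have hsum : Summable fun N : ℕ => ‖N * a N * r ^ (N - 1)‖ := by
    rw [← summable_nat_add_iff 1]
    simpa only [Nat.cast_add_one, Nat.add_sub_cancel] using ha
  have hsum_zero : Summable fun N => a N * (0 : 𝕜) ^ N :=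
    summable_of_ne_finset_zero (s := {0}) fun N hN => by simp_all
  have htball : t ∈ Metric.ball 0 ‖r‖ := mem_ball_zero_iff.2 ht
  refine (hasDerivAt_tsum_of_isPreconnected hsum Metric.isOpen_ball (convex_ball _ _).isPreconnected
    (fun N s _ => hderiv N s) hbound
    (Metric.mem_ball_self ((norm_nonneg t).trans_lt ht)) hsum_zero htball).congr_deriv ?_
  rw [(Summable.of_norm_bounded hsum fun N => hbound N t htball).tsum_eq_zero_add]
  simp

section DetDeriv

open Polynomial

variable {ι 𝕜 : Type*} [Fintype ι] [DecidableEq ι] [NontriviallyNormedField 𝕜]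

theorem hasDerivAt_det_one_add_smul_zero (M : Matrix ι ι 𝕜) :
    HasDerivAt (fun s : 𝕜 => (1 + s • M).det) M.trace 0 := by
  let P : 𝕜[X] := (1 + (X : 𝕜[X]) • M.map C).det
  have hP : (fun s : 𝕜 => (1 + s • M).det) = P.eval := by
    ext s
    simp [P, eval_det, ← Matrix.smul_eq_mul_diagonal]
  rw [hP, ← Matrix.derivative_det_one_add_X_smul]
  exact P.hasDerivAt 0

theorem hasDerivAt_det_one_sub_smul {A : Matrix ι ι 𝕜} {t : 𝕜} (ht : IsUnit (1 - t • A).det) :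
    HasDerivAt (fun s : 𝕜 => (1 - s • A).det)
      (-((1 - t • A).det * ((1 - t • A)⁻¹ * A).trace)) t := by
  have hfactor (s : 𝕜) : (1 - s • A).det =
      (1 - t • A).det * (1 + (s - t) • -((1 - t • A)⁻¹ * A)).det := by
    rw [← Matrix.det_mul]
    congr 1
    rw [mul_add, mul_one, mul_smul_comm, mul_neg, Matrix.mul_nonsing_inv_cancel_left _ _ ht]
    module
  have hzero := hasDerivAt_det_one_add_smul_zero (-((1 - t • A)⁻¹ * A))
  rw [← sub_self t, Matrix.trace_neg] at hzero
  rw [funext hfactor]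
  exact ((hzero.comp_sub_const t t).const_mul _).congr_deriv (mul_neg _ _)

end DetDeriv

section GeneratingFunction

open scoped Matrix.Norms.Operator Topology

variable {ι : Type*} [Fintype ι] [DecidableEq ι]

theorem summable_norm_permBCoeff {A : Matrix ι ι ℝ} (hA : ‖A‖ < 1) (β : ℝ) :
    Summable fun N => ‖permBCoeff β A N‖ := by
  obtain ⟨d, hd⟩ := exists_nat_ge (|β| * Fintype.card ι)
  refine Summable.of_nonneg_of_le (fun _ => norm_nonneg _) (norm_permBCoeff_le hd A) ?_
  exact summable_choose_mul_geometric_of_norm_lt_one d (by rwa [norm_norm])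

theorem hasSum_trace_pow_mul {A : Matrix ι ι ℝ} (hA : ‖A‖ < 1) (B : Matrix ι ι ℝ) :
    HasSum (fun k => (A ^ k * B).trace) ((1 - A)⁻¹ * B).trace := by
  rw [Matrix.nonsing_inv_eq_ringInverse]
  exact ((hasSum_geom_series_inverse A hA).mul_right B).map (Matrix.traceAddMonoidHom ι ℝ)
    continuous_id.matrix_trace

theorem summable_norm_trace_pow_mul {A : Matrix ι ι ℝ} (hA : ‖A‖ < 1) (B : Matrix ι ι ℝ) :
    Summable fun k => ‖(A ^ k * B).trace‖ := by
  have hbound (k : ℕ) : ‖(A ^ k * B).trace‖ ≤ Fintype.card ι * (‖A ^ k‖ * ‖B‖) :=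
    (norm_trace_le _).trans (mul_le_mul_of_nonneg_left (norm_mul_le _ _) (Nat.cast_nonneg _))
  exact (((summable_norm_geometric_of_norm_lt_one hA).mul_right _).mul_left _).of_nonneg_of_le
    (fun _ => norm_nonneg _) hbound

theorem summable_norm_succ_mul_permBCoeff_succ_mul_pow {A : Matrix ι ι ℝ} {t : ℝ}
    (ht : ‖t • A‖ < 1) (β : ℝ) :
    Summable fun N : ℕ => ‖(N + 1) * permBCoeff β A (N + 1) * t ^ N‖ := by
  simp only [succ_mul_permBCoeff_succ_mul_pow, norm_mul β]
  exact (summable_norm_sum_mul_antidiagonal_of_summable_norm (summable_norm_trace_pow_mul ht A)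
    (summable_norm_permBCoeff ht β)).mul_left _

theorem tsum_succ_mul_permBCoeff_succ_mul_pow {A : Matrix ι ι ℝ} {t : ℝ} (ht : ‖t • A‖ < 1)
    (β : ℝ) :
    ∑' N : ℕ, (N + 1) * permBCoeff β A (N + 1) * t ^ N =
      β * ((1 - t • A)⁻¹ * A).trace * ∑' N, permBCoeff β A N * t ^ N := by
  simp only [succ_mul_permBCoeff_succ_mul_pow, ← permBCoeff_smul]
  rw [tsum_mul_left, mul_assoc, ← (hasSum_trace_pow_mul ht A).tsum_eq,
    tsum_mul_tsum_eq_tsum_sum_antidiagonal_of_summable_norm (summable_norm_trace_pow_mul ht A)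
      (summable_norm_permBCoeff ht β)]

theorem hasDerivAt_tsum_permBCoeff_mul_pow {A : Matrix ι ι ℝ} {t : ℝ} (ht : ‖t • A‖ < 1) (β : ℝ) :
    HasDerivAt (fun s => ∑' N, permBCoeff β A N * s ^ N)
      (β * ((1 - t • A)⁻¹ * A).trace * ∑' N, permBCoeff β A N * t ^ N) t := by
  have hnorm : ‖|t| • A‖ < 1 := by rwa [norm_smul, norm_abs_eq_norm, ← norm_smul]
  have hev : ∀ᶠ r in 𝓝[>] |t|, ‖r • A‖ < 1 := by
    have hcont : Continuous fun r : ℝ => ‖r • A‖ := by fun_prop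
    exact (hcont.tendsto _).eventually_lt_const hnorm |>.filter_mono nhdsWithin_le_nhds
  obtain ⟨r, hrA, htr : |t| < r⟩ := (hev.and self_mem_nhdsWithin).exists
  rw [← tsum_succ_mul_permBCoeff_succ_mul_pow ht]
  exact hasDerivAt_tsum_mul_pow (summable_norm_succ_mul_permBCoeff_succ_mul_pow hrA β)
    (htr.trans_le (le_abs_self r))

theorem isUnit_det_one_sub {A : Matrix ι ι ℝ} (hA : ‖A‖ < 1) : IsUnit (1 - A).det :=
  (Matrix.isUnit_iff_isUnit_det _).1 (isUnit_one_sub_of_norm_lt_one hA)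

theorem norm_smul_lt_one {A : Matrix ι ι ℝ} (hA : ‖A‖ < 1) {t : ℝ} (ht : t ∈ Set.Icc 0 1) :
    ‖t • A‖ < 1 := by
  rw [norm_smul, Real.norm_of_nonneg ht.1]
  exact (mul_le_of_le_one_left (norm_nonneg A) ht.2).trans_lt hA

theorem det_one_sub_pos {A : Matrix ι ι ℝ} (hA : ‖A‖ < 1) : 0 < (1 - A).det := by
  by_contra! hdet
  have hcont : Continuous fun s : ℝ => (1 - s • A).det := by fun_prop
  obtain ⟨s, hs, hs0⟩ : (0 : ℝ) ∈ (fun s : ℝ => (1 - s • A).det) '' Set.Icc 0 1 :=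
    intermediate_value_Icc' zero_le_one hcont.continuousOn ⟨by simpa using hdet, by simp⟩
  exact (isUnit_det_one_sub (norm_smul_lt_one hA hs)).ne_zero hs0

theorem tsum_permBCoeff {A : Matrix ι ι ℝ} (hA : ‖A‖ < 1) (β : ℝ) :
    ∑' N, permBCoeff β A N = (1 - A).det ^ (-β) := by
  have hderiv (t : ℝ) (ht : t ∈ Set.Icc (0 : ℝ) 1) : HasDerivAt
      (fun s : ℝ => (∑' N, permBCoeff β A N * s ^ N) * (1 - s • A).det ^ β) 0 t := by
    have hdet : 0 < (1 - t • A).det := det_one_sub_pos (norm_smul_lt_one hA ht)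
    have hG := hasDerivAt_tsum_permBCoeff_mul_pow (norm_smul_lt_one hA ht) β
    have hD := (hasDerivAt_det_one_sub_smul hdet.ne'.isUnit).rpow_const (p := β) (.inl hdet.ne')
    refine (hG.mul hD).congr_deriv ?_
    rw [Real.rpow_sub_one hdet.ne']
    field_simp
    ring
  have hconst := constant_of_has_deriv_right_zero
    (fun t ht => (hderiv t ht).continuousAt.continuousWithinAt)
    (fun t ht => (hderiv t ⟨ht.1, ht.2.le⟩).hasDerivWithinAt) 1 (Set.right_mem_Icc.2 zero_le_one)
  have hzero : ∑' N, permBCoeff β A N * (0 : ℝ) ^ N = 1 := by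
    rw [tsum_eq_single 0 fun N hN => by rw [zero_pow hN, mul_zero], pow_zero, mul_one,
      permBCoeff_zero]
  simp only [hzero, zero_smul, sub_zero, Matrix.det_one, Real.one_rpow, one_pow, mul_one,
    one_smul] at hconst
  rw [Real.rpow_neg (det_one_sub_pos hA).le]
  exact eq_inv_of_mul_eq_one_left hconst

end GeneratingFunction

theorem hasSum_tsum_sum_of_partition {X Y E : Type*} [NormedAddCommGroup E] [CompleteSpace E]
    {F : X → E} {s : Y → Finset X} (hs : ∀ x, ∃! y, x ∈ s y)
    (hF : Summable fun y => ∑ x ∈ s y, ‖F x‖) : HasSum F (∑' y, ∑ x ∈ s y, F x) := by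
  have hsum : Summable F := by
    refine .of_norm ((summable_partition (s := fun y => s y) (fun x => norm_nonneg (F x)) hs).2
      ⟨fun y => (s y).summable fun x => ‖F x‖, ?_⟩)
    exact hF.congr fun y => ((s y).tsum_subtype' fun x => ‖F x‖).symm
  have hsigma := (Set.sigmaEquiv (fun y => s y) hs).hasSum_iff.2 hsum.hasSum
  rw [(hsigma.sigma fun y => (s y).hasSum F).tsum_eq]
  exact hsum.hasSum

section Multiplicity

open Nat

variable {ι α : Type*} [DecidableEq ι] [Fintype α]

/-- The multiplicity `r i` of each label `i` in a labeling `f`, so that `A(n ^ r, n ^ r)` is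
`A.submatrix f f` up to reindexing. -/
def labelMultiplicity (f : α → ι) (i : ι) : ℕ :=
  Fintype.card {a // f a = i}

theorem exists_equiv_sigma_fin_fst_comp_eq (f : α → ι) :
    ∃ e : α ≃ Σ i, Fin (labelMultiplicity f i), Sigma.fst ∘ e = f :=
  ⟨(Equiv.sigmaFiberEquiv f).symm.trans (Equiv.sigmaCongrRight fun _ => Fintype.equivFin _), rfl⟩

theorem labelMultiplicity_fst_comp {r : ι → ℕ} (e : α ≃ Σ i, Fin (r i)) :
    labelMultiplicity (Sigma.fst ∘ e) = r := by
  funext i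
  have e' : {a // (Sigma.fst ∘ e) a = i} ≃ Fin (r i) :=
    (e.subtypeEquiv fun _ => Iff.rfl).trans (Equiv.sigmaSubtype i)
  rw [labelMultiplicity, Fintype.card_congr e', Fintype.card_fin]

variable [Fintype ι]

theorem sum_labelMultiplicity (f : α → ι) : ∑ i, labelMultiplicity f i = Fintype.card α := by
  obtain ⟨e, -⟩ := exists_equiv_sigma_fin_fst_comp_eq f
  simp [Fintype.card_congr e]

variable [DecidableEq α]

theorem card_equiv_fst_comp_eq (f : α → ι) :
    #{e : α ≃ Σ i, Fin (labelMultiplicity f i) | Sigma.fst ∘ e = f} =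
      ∏ i, (labelMultiplicity f i)! := by
  obtain ⟨e, he⟩ := exists_equiv_sigma_fin_fst_comp_eq f
  rw [← Fintype.card_subtype]
  refine Eq.trans ?_ (DomMulAct.stabilizer_card f)
  refine (Fintype.card_congr ((Equiv.equivCongr (Equiv.refl α) e).subtypeEquiv fun g => ?_)).symm
  rw [← congrArg (· ∘ g) he]
  rfl

theorem card_labelMultiplicity_eq_mul_prod_factorial {r : ι → ℕ} (hr : ∑ i, r i = Fintype.card α) :
    #{f : α → ι | labelMultiplicity f = r} * ∏ i, (r i)! = (Fintype.card α)! := by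
  have e : α ≃ Σ i, Fin (r i) := Fintype.equivOfCardEq (by simp [hr])
  rw [← Fintype.card_equiv e, ← Finset.card_univ, card_eq_sum_card_fiberwise
    (f := fun e : α ≃ Σ i, Fin (r i) => Sigma.fst ∘ e) (t := {f | labelMultiplicity f = r})
    fun e _ => by simp [labelMultiplicity_fst_comp], sum_const_nat]
  rintro f hf
  obtain rfl := (mem_filter.1 hf).2
  exact card_equiv_fst_comp_eq f

end Multiplicity

section Regroup

open Nat

variable {ι K : Type*} [Fintype ι] [DecidableEq ι] [Field K]

/-- The term `(1 / r!) perm_β A(n ^ r, n ^ r)` of the MacMahon series. -/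
def macMahonTerm (β : K) (A : Matrix ι ι K) (r : ι → ℕ) : K :=
  ((∏ i, (r i)! : ℕ) : K)⁻¹ *
    permB β (A.submatrix Sigma.fst Sigma.fst : Matrix (Σ i, Fin (r i)) (Σ i, Fin (r i)) K)

theorem permB_submatrix_eq_permB_fst {α : Type*} [Fintype α] [DecidableEq α] (β : K)
    (A : Matrix ι ι K) (f : α → ι) :
    permB β (A.submatrix f f) = permB β (A.submatrix Sigma.fst Sigma.fst :
      Matrix (Σ i, Fin (labelMultiplicity f i)) (Σ i, Fin (labelMultiplicity f i)) K) := by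
  obtain ⟨e, he⟩ := exists_equiv_sigma_fin_fst_comp_eq f
  rw [← permB_submatrix_equiv e, Matrix.submatrix_submatrix, he]

theorem permBCoeff_eq_sum_macMahonTerm [CharZero K] (β : K) (A : Matrix ι ι K) (N : ℕ) :
    permBCoeff β A N = ∑ r ∈ piAntidiag univ N, macMahonTerm β A r := by
  have hfiber (r : ι → ℕ) (hr : r ∈ piAntidiag univ N) :
      ∑ f : Fin N → ι with labelMultiplicity f = r, permB β (A.submatrix f f) =
        N ! * macMahonTerm β A r := by
    have hcard := card_labelMultiplicity_eq_mul_prod_factorial (α := Fin N) (r := r)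
      (by simpa using hr)
    have hne : ((∏ i, (r i)! : ℕ) : K) ≠ 0 :=
      cast_ne_zero.2 (prod_ne_zero_iff.2 fun i _ => (r i).factorial_ne_zero)
    rw [Fintype.card_fin] at hcard
    rw [macMahonTerm, ← hcard, cast_mul, mul_assoc, mul_inv_cancel_left₀ hne, ← nsmul_eq_mul]
    refine sum_eq_card_nsmul fun f hf => ?_
    obtain rfl := (mem_filter.1 hf).2
    exact permB_submatrix_eq_permB_fst β A f
  apply mul_left_cancel₀ (cast_ne_zero.2 N.factorial_ne_zero : (N ! : K) ≠ 0)
  rw [factorial_mul_permBCoeff, labelSum, mul_sum, ← sum_congr rfl hfiber,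
    sum_fiberwise_of_maps_to fun f _ => by simp [sum_labelMultiplicity]]

theorem abs_macMahonTerm_le (β : ℝ) (A : Matrix ι ι ℝ) (r : ι → ℕ) :
    |macMahonTerm β A r| ≤ macMahonTerm |β| (A.map abs) r := by
  rw [macMahonTerm, macMahonTerm, abs_mul, abs_inv, Nat.abs_cast]
  gcongr
  exact abs_permB_le β _

open scoped Matrix.Norms.Operator

-- Here `‖A‖` is the largest sum of absolute values in a row of `A`.
theorem beta_extended_MMT_general {A : Matrix ι ι ℝ} (hA : ‖A‖ < 1) (β : ℝ) :
    HasSum (macMahonTerm β A) ((1 - A).det ^ (-β)) := by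
  simp only [← tsum_permBCoeff hA, permBCoeff_eq_sum_macMahonTerm]
  refine hasSum_tsum_sum_of_partition (fun r => ⟨∑ i, r i, by simp, by simp +contextual⟩) ?_
  refine .of_nonneg_of_le (fun N => sum_nonneg fun r _ => norm_nonneg _)
    (fun N => sum_le_sum fun r _ => abs_macMahonTerm_le β A r) ?_
  simp only [← permBCoeff_eq_sum_macMahonTerm]
  exact (summable_norm_permBCoeff ((norm_map_abs A).trans_lt hA) |β|).of_norm

end Regroup

/-- The β-extended MacMahon Master Theorem:
`Σ_r (1/r!) perm_β A(n^r,n^r) = det(I - A)^{-β}` for sufficiently small `A`. -/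
theorem beta_extended_MMT (n : ℕ) (β : ℝ) :
    ∃ ε > (0 : ℝ), ∀ A : Matrix (Fin n) (Fin n) ℝ, (∀ i j, |A i j| < ε) →
      ∑' r : Fin n → ℕ, ((∏ i, (r i).factorial : ℕ) : ℝ)⁻¹ * permB β (repA A r)
        = Matrix.det (1 - A) ^ (-β) := by
  refine ⟨1 / (n + 1), by positivity, fun A hA => ?_⟩
  have hnorm := linfty_opNorm_lt_one_of_forall_lt (A := A) (by rwa [Fintype.card_fin])
  exact (beta_extended_MMT_general hnorm β).tsum_eq
end
end

section
/- (Submatrix MMT, β = -1 case) Let B be n'×n', A be n×n, U be n'×n, V be n×n' matrices over a commutative ring. Then Σ_{r ∈ {0,1}^n} det [[B, U(n^r)],[V(n^r), A(n^r,n^r)]] = det [[B, -U],[-V, I + A]], where U(n^r), V(n^r), A(n^r,n^r) denote the submatrices obtained by keeping only the columns/rows indexed by {i : r_i = 1}. -/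
open scoped Classical

/-!
Conjugating by `diag(I, -I)` removes the signs on the right-hand side. Each lower row of
`[[B, U], [V, D + A]]`, with `D` diagonal, is a sum of a row of `[V, A]` and a row of `[0, D]`, so
expanding the determinant over these choices gives one term per set `S` of rows taken from `[V, A]`.
The rows of `[0, D]` outside `S` delete the complementary columns at the cost of a factor `∏ dᵢ`,
which is `1` for `D = I`.
-/

section BlockDeterminants

open Matrix

variable {m n R : Type*} [Fintype m] [Fintype n] [DecidableEq m] [DecidableEq n] [CommRing R]

theorem det_fromBlocks_neg₁₂_neg₂₁ (B : Matrix m m R) (U : Matrix m n R) (V : Matrix n m R)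
    (A : Matrix n n R) :
    (fromBlocks B (-U) (-V) A).det = (fromBlocks B U V A).det := by
  let D : Matrix (m ⊕ n) (m ⊕ n) R := fromBlocks 1 0 0 (-1)
  have D_mul_self : D * D = 1 := by simp [D, fromBlocks_multiply]
  have conj : fromBlocks B (-U) (-V) A = D * fromBlocks B U V A * D := by
    simp [D, fromBlocks_multiply]
  rw [conj, det_mul_right_comm, D_mul_self, one_mul]

theorem det_fromBlocks_add₂₁_add₂₂ (B : Matrix m m R) (U : Matrix m n R) (V V' : Matrix n m R)
    (A A' : Matrix n n R) :
    (fromBlocks B U (V + V') (A + A')).det =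
      ∑ S : Finset n, (fromBlocks B U (of (S.piecewise V.row V'.row))
        (of (S.piecewise A.row A'.row))).det := by
  let detLower : MultilinearMap R (fun _ : n ↦ m ⊕ n → R) R :=
    (detRowAlternating (n := m ⊕ n) (R := R)).toMultilinearMap.currySum
      fun i ↦ Sum.elim (B i) (U i)
  have detLower_apply (W : Matrix n m R) (C : Matrix n n R) :
      detLower (fun i ↦ Sum.elim (W i) (C i)) = (fromBlocks B U W C).det := by
    refine congrArg det ?_
    ext (i | i) (j | j) <;> rfl
  have add_rows : (fun i ↦ Sum.elim ((V + V') i) ((A + A') i)) =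
      (fun i ↦ Sum.elim (V i) (A i)) + fun i ↦ Sum.elim (V' i) (A' i) := by
    ext i (j | j) <;> rfl
  rw [← detLower_apply, add_rows, detLower.map_add_univ]
  refine Finset.sum_congr rfl fun S _ ↦ ?_
  rw [← detLower_apply]
  congr 1
  ext i (j | j) <;> by_cases hi : i ∈ S <;> simp [Finset.piecewise, hi]

theorem det_fromBlocks_piecewise_zero_diagonal (B : Matrix m m R) (U : Matrix m n R)
    (V : Matrix n m R) (A : Matrix n n R) (d : n → R) (S : Finset n) :
    (fromBlocks B U (of (S.piecewise V.row (0 : Matrix n m R).row))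
      (of (S.piecewise A.row (diagonal d).row))).det =
      (∏ i ∈ Sᶜ, d i) *
        (fromBlocks B (U.submatrix id ((↑) : S → n)) (V.submatrix ((↑) : S → n) id)
          (A.submatrix ((↑) : S → n) (↑))).det := by
  let e : (m ⊕ S) ⊕ {i // i ∉ S} ≃ m ⊕ n :=
    (Equiv.sumAssoc _ _ _).trans (Equiv.sumCongr (Equiv.refl m) (Equiv.sumCompl (· ∈ S)))
  have reindex_eq :
      (fromBlocks B U (of (S.piecewise V.row (0 : Matrix n m R).row))
        (of (S.piecewise A.row (diagonal d).row))).submatrix e e =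
      fromBlocks
        (fromBlocks B (U.submatrix id (↑)) (V.submatrix (↑) id) (A.submatrix (↑) (↑)))
        (fromRows (U.submatrix id (↑)) (A.submatrix (↑) (↑))) 0
        (diagonal fun i : {i // i ∉ S} ↦ d i) := by
    ext ((i | i) | i) j
    · rcases j with (j | j) | j <;> rfl
    · rcases j with (j | j) | j <;> simp [e, Finset.piecewise]
    · rcases j with (j | j) | j
      · simp [e, Finset.piecewise, i.2]
      · have hij : (i : n) ≠ j := fun h ↦ i.2 (h ▸ j.2)
        simp [e, Finset.piecewise, i.2, hij]
      · simp [e, Finset.piecewise, i.2, diagonal_apply, Subtype.ext_iff]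
  rw [← det_submatrix_equiv_self e, reindex_eq, det_fromBlocks_zero₂₁, det_diagonal, mul_comm,
    Finset.prod_subtype Sᶜ (p := (· ∉ S)) fun _ ↦ Finset.mem_compl]

theorem submatrix_MMT_beta_neg_one_general (B : Matrix m m R) (U : Matrix m n R)
    (V : Matrix n m R) (A : Matrix n n R) (d : n → R) :
    ∑ S : Finset n, (∏ i ∈ Sᶜ, d i) *
        (fromBlocks B (U.submatrix id ((↑) : S → n)) (V.submatrix ((↑) : S → n) id)
          (A.submatrix ((↑) : S → n) (↑))).det =
      (fromBlocks B (-U) (-V) (diagonal d + A)).det := by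
  calc
    _ = ∑ S : Finset n, (fromBlocks B U (of (S.piecewise V.row (0 : Matrix n m R).row))
          (of (S.piecewise A.row (diagonal d).row))).det :=
      Finset.sum_congr rfl fun S _ ↦ (det_fromBlocks_piecewise_zero_diagonal B U V A d S).symm
    _ = (fromBlocks B U (V + 0) (A + diagonal d)).det :=
      (det_fromBlocks_add₂₁_add₂₂ B U V 0 A (diagonal d)).symm
    _ = (fromBlocks B (-U) (-V) (diagonal d + A)).det := by
      rw [det_fromBlocks_neg₁₂_neg₂₁, add_zero, add_comm]

end BlockDeterminants

/-- Submatrix MMT, β = -1 case: summing the determinants of the block matrices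
over all principal submatrices of `A` (keeping `B` intact) yields
`det [[B, -U], [-V, I + A]]`. -/
theorem submatrix_MMT_beta_neg_one {n' n : ℕ} {R : Type*} [CommRing R]
    (B : Matrix (Fin n') (Fin n') R) (U : Matrix (Fin n') (Fin n) R)
    (V : Matrix (Fin n) (Fin n') R) (A : Matrix (Fin n) (Fin n) R) :
    ∑ S : Finset (Fin n),
        Matrix.det (Matrix.fromBlocks B
          (U.submatrix id (Subtype.val : {x // x ∈ S} → Fin n))
          (V.submatrix (Subtype.val : {x // x ∈ S} → Fin n) id)
          (A.submatrix (Subtype.val : {x // x ∈ S} → Fin n) Subtype.val))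
      = Matrix.det (Matrix.fromBlocks B (-U) (-V) (1 + A)) := by
  simpa using submatrix_MMT_beta_neg_one_general B U V A 1
end

section
/- Let p_r(α,β) = Σ_{s,t} p_{rst} α^s β^t where p_{rst} counts partial permutations of an r-element set having s non-closed (necklace) components and t cycles; equivalently pperm_{β,θ,φ} of the r×r all-z matrix with θ_i = φ_i = √(αz) equals p_r(α,β) z^r. Then the exponential generating function is Σ_{r≥0} p_r(α,β) z^r / r! = exp(αz/(1-z)) / (1-z)^β. -/
open scoped Classical
open Matrix

noncomputable section

/-- A partial permutation (injective partial map) of `α`: a domain together with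
an injection of the domain into `α`. -/
abbrev PPerm (α : Type*) [Fintype α] [DecidableEq α] :=
  (D : Finset α) × ({x // x ∈ D} ↪ α)

variable {α : Type*} [Fintype α] [DecidableEq α]

/-- The partial function determined by a partial permutation. -/
def pfun (ψ : PPerm α) : α → Option α :=
  fun x => if h : x ∈ ψ.1 then some (ψ.2 ⟨x, h⟩) else none

/-- `k`-fold iteration of a partial permutation. -/
def piter (ψ : PPerm α) (k : ℕ) (x : α) : Option α :=
  (fun o => o.bind (pfun ψ))^[k] (some x)

/-- The image of a partial permutation. -/
def pim (ψ : PPerm α) : Finset α := Finset.univ.image fun d => ψ.2 d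

/-- `x` lies on a closed cycle of the partial permutation `ψ`. -/
def isCyc (ψ : PPerm α) (x : α) : Prop :=
  ∃ k ∈ Finset.range (Fintype.card α + 1), k ≠ 0 ∧ piter ψ k x = some x

/-- The forward orbit of `x` under `ψ`. -/
def porb (ψ : PPerm α) (x : α) : Finset α :=
  Finset.univ.filter fun y => ∃ k ∈ Finset.range (Fintype.card α + 1), piter ψ k x = some y

/-- The number of cycles `C(π_ψ)` of the permutation part of `ψ`. -/
def pCycleCount (ψ : PPerm α) : ℕ :=
  ((Finset.univ.filter fun x => isCyc ψ x).image (porb ψ)).card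

/-- The `(β,θ,φ)`-extended partial permanent of a matrix. -/
def ppermB {R : Type*} [CommRing R] (β : R) (θ φ : α → R) (M : Matrix α α R) : R :=
  ∑ ψ : PPerm α, β ^ pCycleCount ψ * (∏ d : {x // x ∈ ψ.1}, M d (ψ.2 d)) *
    (∏ j ∈ Finset.univ \ pim ψ, θ j) * (∏ k ∈ Finset.univ \ ψ.1, φ k)

/-- `p_r(α,β) = Σ_{s,t} p_{rst} α^s β^t`, where `p_{rst}` counts partial
permutations of an `r`-element set with `s` open (path/necklace) components and
`t` cycles: each partial permutation `ψ` has `r - |dom ψ|` path components. -/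
def pPoly (r : ℕ) (a b : ℝ) : ℝ :=
  ∑ ψ : PPerm (Fin r), a ^ (r - ψ.1.card) * b ^ pCycleCount ψ

/-!
Build a partial permutation of an `n`-element set by giving its domain elements an image one at a
time. When `k` elements already have one, the next element `x` is the last vertex of an open path,
and its image may be any of the `n - k` vertices that start an open path. Exactly one of these
choices, the start of the path ending in `x`, closes a cycle. Hence
`∑ β ^ (number of cycles)` over the injections of a `d`-element domain is
`∏ k < d, (β + n - 1 - k)`. With `s = n - d` this gives
`p_n(α, β) / n! = ∑ s + d = n, α ^ s / s! * multichoose (β + s) d`. Summing first over `d` with the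
binomial series `∑ multichoose (β + s) d * z ^ d = (1 - z) ^ (-β - s)` leaves the exponential
series of `α z / (1 - z)`.
-/

open Relation Finset Polynomial

/-! ### Cycles of a relation -/

section Cycles

variable {V : Type*} {E : V → V → Prop} {x y u v : V}

/-- The vertices reachable from `u` in the directed graph `E`, including `u` itself. -/
def reach (E : V → V → Prop) (u : V) : Set V := {v | ReflTransGen E u v}

/-- The cycles of the directed graph `E`, each encoded as the set of vertices reachable from one
of its points. For right unique `E` these are the vertex sets of the cycles. -/
def cycles (E : V → V → Prop) : Set (Set V) := reach E '' {u | TransGen E u u}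

/-- The directed graph `E` with the additional arc `x → y`. -/
def addArc (E : V → V → Prop) (x y : V) (u v : V) : Prop := E u v ∨ (u = x ∧ v = y)

theorem addArc_self (E : V → V → Prop) (x y : V) : addArc E x y x y := Or.inr ⟨rfl, rfl⟩

theorem reflTransGen_addArc_of_reflTransGen (h : ReflTransGen E u v) :
    ReflTransGen (addArc E x y) u v :=
  ReflTransGen.mono (fun _ _ => Or.inl) _ _ h

theorem transGen_addArc : TransGen (addArc E x y) u v ↔
    TransGen E u v ∨ (ReflTransGen E u x ∧ ReflTransGen E y v) := by
  constructor
  · intro h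
    induction h with
    | single h =>
      rcases h with h | ⟨rfl, rfl⟩
      · exact Or.inl (.single h)
      · exact Or.inr ⟨.refl, .refl⟩
    | tail _ h ih =>
      rcases h with h | ⟨rfl, rfl⟩
      · exact ih.imp (·.tail h) (And.imp_right (·.tail h))
      · exact Or.inr ⟨ih.elim (·.to_reflTransGen) And.left, .refl⟩
  · rintro (h | ⟨hux, hyv⟩)
    · exact TransGen.mono (fun _ _ => Or.inl) _ _ h
    · have huy := TransGen.tail' (reflTransGen_addArc_of_reflTransGen hux) (addArc_self E x y)
      exact huy.trans_left (reflTransGen_addArc_of_reflTransGen hyv)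

theorem reflTransGen_addArc : ReflTransGen (addArc E x y) u v ↔
    ReflTransGen E u v ∨ (ReflTransGen E u x ∧ ReflTransGen E y v) := by
  rw [reflTransGen_iff_eq_or_transGen, reflTransGen_iff_eq_or_transGen, transGen_addArc, or_assoc]

theorem reflTransGen_symm_of_transGen_self (hE : Relator.RightUnique E) (hu : TransGen E u u)
    (huv : ReflTransGen E u v) : ReflTransGen E v u := by
  induction huv with
  | refl => exact .refl
  | tail _ hvw ih =>
    have hvu := TransGen.trans_right ih hu
    obtain ⟨w', hvw', hw'u⟩ := TransGen.head'_iff.1 hvu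
    exact hE hvw hvw' ▸ hw'u

theorem not_reflTransGen_of_transGen_self (hE : Relator.RightUnique E) (hx : ∀ v, ¬ E x v)
    (hu : TransGen E u u) : ¬ ReflTransGen E u x := by
  intro hux
  have hxu := TransGen.trans_right (reflTransGen_symm_of_transGen_self hE hu hux) hu
  obtain ⟨v, hxv, -⟩ := TransGen.head'_iff.1 hxu
  exact hx v hxv

theorem cycles_eq_empty (hE : ∀ u v, ¬ E u v) : cycles E = ∅ := by
  rw [cycles, Set.image_eq_empty, Set.eq_empty_iff_forall_notMem]
  intro u hu
  obtain ⟨v, huv, -⟩ := TransGen.head'_iff.1 hu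
  exact hE u v huv

theorem reach_notMem_cycles (hy : ∀ u, ¬ E u y) : reach E y ∉ cycles E := by
  rintro ⟨u, hu, huy⟩
  have huy : ReflTransGen E u y := (Set.ext_iff.1 huy y).2 .refl
  obtain ⟨v, -, hvy⟩ := TransGen.tail'_iff.1 (TransGen.trans_left hu huy)
  exact hy v hvy

theorem reach_addArc_of_not_reflTransGen (hux : ¬ ReflTransGen E u x) :
    reach (addArc E x y) u = reach E u := by
  ext v
  simp [reach, reflTransGen_addArc, hux]

theorem reach_addArc_of_reflTransGen (hyu : ReflTransGen E y u) (hux : ReflTransGen E u x) :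
    reach (addArc E x y) u = reach E y := by
  ext v
  simp only [reach, Set.mem_ofPred_eq, reflTransGen_addArc]
  exact ⟨fun h => h.elim hyu.trans And.right, fun h => Or.inr ⟨hux, h⟩⟩

theorem cycles_addArc_of_not_reflTransGen (hE : Relator.RightUnique E) (hx : ∀ v, ¬ E x v)
    (hyx : ¬ ReflTransGen E y x) : cycles (addArc E x y) = cycles E := by
  have hcyc (u : V) : TransGen (addArc E x y) u u ↔ TransGen E u u :=
    transGen_addArc.trans (or_iff_left fun h => hyx (h.2.trans h.1))
  simp only [cycles, hcyc]
  exact Set.image_congr fun u hu =>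
    reach_addArc_of_not_reflTransGen (not_reflTransGen_of_transGen_self hE hx hu)

theorem cycles_addArc_of_reflTransGen (hE : Relator.RightUnique E) (hx : ∀ v, ¬ E x v)
    (hyx : ReflTransGen E y x) : cycles (addArc E x y) = insert (reach E y) (cycles E) := by
  have hold {u : V} (hu : TransGen E u u) : reach (addArc E x y) u = reach E u :=
    reach_addArc_of_not_reflTransGen (not_reflTransGen_of_transGen_self hE hx hu)
  ext s
  constructor
  · rintro ⟨u, hu, rfl⟩
    rcases transGen_addArc.1 hu with hu | ⟨hux, hyu⟩
    · exact Or.inr ⟨u, hu, (hold hu).symm⟩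
    · exact Or.inl (reach_addArc_of_reflTransGen hyu hux)
  · rintro (rfl | ⟨u, hu, rfl⟩)
    · exact ⟨y, transGen_addArc.2 (Or.inr ⟨hyx, .refl⟩), reach_addArc_of_reflTransGen .refl hyx⟩
    · exact ⟨u, transGen_addArc.2 (Or.inl hu), hold hu⟩

theorem ncard_cycles_addArc [Finite V] (hE : Relator.RightUnique E) (hx : ∀ v, ¬ E x v)
    (hy : ∀ u, ¬ E u y) :
    (cycles (addArc E x y)).ncard = (cycles E).ncard + if ReflTransGen E y x then 1 else 0 := by
  split_ifs with hyx
  · rw [cycles_addArc_of_reflTransGen hE hx hyx,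
      Set.ncard_insert_of_notMem (reach_notMem_cycles hy)]
  · rw [cycles_addArc_of_not_reflTransGen hE hx hyx, add_zero]

theorem exists_source_reflTransGen [Finite V] (hE : Relator.RightUnique E) (hx : ∀ v, ¬ E x v) :
    ∃ y, (∀ u, ¬ E u y) ∧ ReflTransGen E y x := by
  let r (u v : {u // ReflTransGen E u x}) : Prop := TransGen E u v
  have : IsTrans _ r := ⟨fun _ _ _ => TransGen.trans⟩
  have : Std.Irrefl r := ⟨fun u hu => not_reflTransGen_of_transGen_self hE hx hu u.2⟩
  obtain ⟨⟨y, hyx⟩, -, hmin⟩ :=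
    (Finite.wellFounded_of_trans_of_irrefl r).has_min Set.univ ⟨⟨x, .refl⟩, trivial⟩
  exact ⟨y, fun u huy => hmin ⟨u, hyx.head huy⟩ trivial (.single huy), hyx⟩

theorem existsUnique_source_reflTransGen [Finite V] (hE : Relator.BiUnique E)
    (hx : ∀ v, ¬ E x v) : ∃! y, (∀ u, ¬ E u y) ∧ ReflTransGen E y x := by
  have eq_of_source {u y : V} (hy : ∀ u, ¬ E u y) (huy : ReflTransGen E u y) : y = u :=
    huy.cases_tail.resolve_right fun ⟨w, _, hwy⟩ => hy w hwy
  obtain ⟨y, hy, hyx⟩ := exists_source_reflTransGen hE.2 hx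
  refine ⟨y, ⟨hy, hyx⟩, fun y' ⟨hy', hyx'⟩ => ?_⟩
  have hswap : Relator.RightUnique (Function.swap E) := hE.1.flip
  rcases ReflTransGen.total_of_right_unique hswap (reflTransGen_swap.2 hyx)
    (reflTransGen_swap.2 hyx') with h | h
  · exact (eq_of_source hy (reflTransGen_swap.1 h)).symm
  · exact eq_of_source hy' (reflTransGen_swap.1 h)

end Cycles

/-! ### Cycles of a partial permutation -/

namespace PPerm

/-- The functional graph of a partial permutation, as a relation. -/
def Arc (ψ : PPerm α) (u v : α) : Prop := pfun ψ u = some v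

theorem arc_iff (ψ : PPerm α) (u v : α) : Arc ψ u v ↔ ∃ h : u ∈ ψ.1, ψ.2 ⟨u, h⟩ = v := by
  unfold Arc pfun
  split_ifs with h <;> simp [h]

theorem biUnique_arc (ψ : PPerm α) : Relator.BiUnique (Arc ψ) := by
  constructor
  · intro u v w huw hvw
    obtain ⟨hu, huw⟩ := (arc_iff ψ u w).1 huw
    obtain ⟨hv, hvw⟩ := (arc_iff ψ v w).1 hvw
    exact congrArg Subtype.val (ψ.2.injective (huw.trans hvw.symm))
  · intro u v w huv huw
    exact Option.some.inj (huv.symm.trans huw)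

theorem piter_succ (ψ : PPerm α) (k : ℕ) (x : α) :
    piter ψ (k + 1) x = (piter ψ k x).bind (pfun ψ) := by
  simp only [piter, Function.iterate_succ_apply']

theorem piter_one (ψ : PPerm α) (x : α) : piter ψ 1 x = pfun ψ x := rfl

theorem piter_add (ψ : PPerm α) (k l : ℕ) (x : α) :
    piter ψ (k + l) x = (piter ψ k x).bind (piter ψ l) := by
  induction l with
  | zero => exact (Option.bind_fun_some _).symm
  | succ l ih => rw [← add_assoc, piter_succ, ih, Option.bind_assoc]; simp only [piter_succ]

theorem reflTransGen_arc_iff_exists_piter (ψ : PPerm α) (x y : α) :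
    ReflTransGen (Arc ψ) x y ↔ ∃ k, piter ψ k x = some y := by
  constructor
  · intro h
    induction h with
    | refl => exact ⟨0, rfl⟩
    | tail _ hvw ih =>
      obtain ⟨k, hk⟩ := ih
      exact ⟨k + 1, by rw [piter_succ, hk]; exact hvw⟩
  · rintro ⟨k, hk⟩
    induction k generalizing y with
    | zero => exact Option.some.inj hk ▸ .refl
    | succ k ih =>
      rw [piter_succ, Option.bind_eq_some_iff] at hk
      obtain ⟨w, hw, hwy⟩ := hk
      exact (ih w hw).tail hwy

theorem exists_lt_piter_eq_of_card_le (ψ : PPerm α) {n : ℕ} {x y : α}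
    (hn : Fintype.card α ≤ n) (h : piter ψ n x = some y) : ∃ m < n, piter ψ m x = some y := by
  -- Two of the first `n + 1` iterates agree, and the loop between them can be cut out.
  have hsplit {i : ℕ} (hi : i ≤ n) : (piter ψ i x).bind (piter ψ (n - i)) = some y := by
    rw [← piter_add, Nat.add_sub_cancel' hi, h]
  have hdefined : Set.MapsTo (piter ψ · x) (range (n + 1)) (univ.map (.some : α ↪ Option α)) := by
    intro i hi
    obtain ⟨w, hw, -⟩ := Option.bind_eq_some_iff.1
      (hsplit (Nat.lt_succ_iff.1 (mem_range.1 (mem_coe.1 hi))))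
    simp [hw]
  obtain ⟨i, hi, j, hj, hne, heq⟩ :=
    exists_ne_map_eq_of_card_lt_of_maps_to (by simpa using Nat.lt_succ_iff.2 hn) hdefined
  wlog hij : i < j generalizing i j
  · exact this j hj i hi hne.symm heq.symm (hne.lt_or_gt.resolve_left hij)
  have hjn : j ≤ n := Nat.lt_succ_iff.1 (mem_range.1 hj)
  exact ⟨i + (n - j), by omega, by rw [piter_add, show piter ψ i x = _ from heq, hsplit hjn]⟩

theorem reflTransGen_arc_iff (ψ : PPerm α) (x y : α) :
    ReflTransGen (Arc ψ) x y ↔ ∃ k < Fintype.card α, piter ψ k x = some y := by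
  rw [reflTransGen_arc_iff_exists_piter]
  refine ⟨fun ⟨n, hn⟩ => ?_, fun ⟨k, _, hk⟩ => ⟨k, hk⟩⟩
  induction n using Nat.strong_induction_on with
  | _ n ih =>
    rcases lt_or_ge n (Fintype.card α) with hlt | hge
    · exact ⟨n, hlt, hn⟩
    · obtain ⟨m, hm, hmy⟩ := exists_lt_piter_eq_of_card_le ψ hge hn
      exact ih m hm hmy

theorem isCyc_iff_transGen_arc (ψ : PPerm α) (x : α) : isCyc ψ x ↔ TransGen (Arc ψ) x x := by
  have hstep (k : ℕ) : piter ψ (1 + k) x = some x ↔ ∃ w, Arc ψ x w ∧ piter ψ k w = some x := by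
    rw [piter_add, piter_one, Option.bind_eq_some_iff]; rfl
  rw [TransGen.head'_iff]
  constructor
  · rintro ⟨k, -, hk0, hk⟩
    obtain ⟨l, rfl⟩ := Nat.exists_eq_add_of_le (Nat.one_le_iff_ne_zero.2 hk0)
    obtain ⟨w, hxw, hwx⟩ := (hstep l).1 hk
    exact ⟨w, hxw, (reflTransGen_arc_iff_exists_piter ψ w x).2 ⟨l, hwx⟩⟩
  · rintro ⟨w, hxw, hwx⟩
    obtain ⟨k, hk, hkx⟩ := (reflTransGen_arc_iff ψ w x).1 hwx
    exact ⟨1 + k, mem_range.2 (by omega), by omega, (hstep k).2 ⟨w, hxw, hkx⟩⟩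

theorem coe_porb (ψ : PPerm α) (x : α) : (porb ψ x : Set α) = reach (Arc ψ) x := by
  ext y
  simp only [porb, coe_filter, mem_univ, true_and, reach, Set.mem_ofPred_eq]
  constructor
  · rintro ⟨k, -, hk⟩
    exact (reflTransGen_arc_iff_exists_piter ψ x y).2 ⟨k, hk⟩
  · intro h
    obtain ⟨k, hk, hky⟩ := (reflTransGen_arc_iff ψ x y).1 h
    exact ⟨k, mem_range.2 (by omega), hky⟩

theorem pCycleCount_eq_ncard_cycles (ψ : PPerm α) :
    pCycleCount ψ = (cycles (Arc ψ)).ncard := by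
  have himage : cycles (Arc ψ) =
      (↑) '' (((univ.filter fun x => isCyc ψ x).image (porb ψ) : Finset (Finset α)) :
        Set (Finset α)) := by
    simp only [cycles, coe_image, coe_filter, mem_univ, true_and, Set.image_image, coe_porb,
      isCyc_iff_transGen_arc]
  rw [himage, Set.ncard_image_of_injective _ coe_injective, Set.ncard_coe_finset, pCycleCount]

/-! ### Extending a partial permutation by one arc -/

/-- Injections on `insert x D` are injections on `D` together with a value for `x` outside their
range. -/
def embeddingInsertEquiv {D : Finset α} {x : α} (hx : x ∉ D) :
    ({u // u ∈ insert x D} ↪ α) ≃ Σ f : {u // u ∈ D} ↪ α, ↥(Set.range f)ᶜ :=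
  (Equiv.embeddingCongr (subtypeInsertEquivOption hx) (Equiv.refl α)).trans
    (Function.Embedding.optionEmbeddingEquiv _ _)

variable {D : Finset α} {x : α}

/-- The partial permutation `f`, extended by the arc `x → y`. -/
def extend (hx : x ∉ D) (f : {u // u ∈ D} ↪ α) (y : ↥(Set.range f)ᶜ) : PPerm α :=
  ⟨insert x D, (embeddingInsertEquiv hx).symm ⟨f, y⟩⟩

theorem arc_extend (hx : x ∉ D) (f : {u // u ∈ D} ↪ α) (y : ↥(Set.range f)ᶜ) :
    Arc (extend hx f y) = addArc (Arc ⟨D, f⟩) x y := by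
  ext u v
  simp only [addArc, arc_iff, extend]
  by_cases hu : u = x
  · subst hu
    simp [hx, embeddingInsertEquiv, subtypeInsertEquivOption,
      Function.Embedding.optionEmbeddingEquiv, eq_comm]
  · by_cases huD : u ∈ D
    · simp [hu, huD, embeddingInsertEquiv, subtypeInsertEquivOption,
        Function.Embedding.optionEmbeddingEquiv]
    · simp [hu, huD]

theorem mem_compl_range_iff (f : {u // u ∈ D} ↪ α) (y : α) :
    y ∈ (Set.range f)ᶜ ↔ ∀ u, ¬ Arc ⟨D, f⟩ u y := by
  simp [arc_iff]

theorem not_arc_of_notMem (hx : x ∉ D) (f : {u // u ∈ D} ↪ α) (v : α) : ¬ Arc ⟨D, f⟩ x v :=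
  fun h => hx ((arc_iff _ x v).1 h).1

theorem pCycleCount_extend (hx : x ∉ D) (f : {u // u ∈ D} ↪ α) (y : ↥(Set.range f)ᶜ) :
    pCycleCount (extend hx f y) =
      pCycleCount (⟨D, f⟩ : PPerm α) + if ReflTransGen (Arc ⟨D, f⟩) y x then 1 else 0 := by
  rw [pCycleCount_eq_ncard_cycles, pCycleCount_eq_ncard_cycles, arc_extend]
  exact ncard_cycles_addArc (biUnique_arc _).2 (not_arc_of_notMem hx f)
    ((mem_compl_range_iff f y).1 y.2)

theorem existsUnique_extend_closing_cycle (hx : x ∉ D) (f : {u // u ∈ D} ↪ α) :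
    ∃! y : ↥(Set.range f)ᶜ, ReflTransGen (Arc ⟨D, f⟩) y x := by
  obtain ⟨y, ⟨hy, hyx⟩, hunique⟩ :=
    existsUnique_source_reflTransGen (biUnique_arc ⟨D, f⟩) (not_arc_of_notMem hx f)
  exact ⟨⟨y, (mem_compl_range_iff f y).2 hy⟩, hyx, fun y' hy'x =>
    Subtype.ext (hunique y' ⟨(mem_compl_range_iff f y').1 y'.2, hy'x⟩)⟩

end PPerm

/-! ### Enumeration by cycles -/

theorem sum_pow_ite_of_existsUnique {ι R : Type*} [Fintype ι] [Ring R] {p : ι → Prop}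
    (hp : ∃! i, p i) (b : R) :
    ∑ i, b ^ (if p i then 1 else 0) = b + (Fintype.card ι - 1) := by
  obtain ⟨i₀, hi₀, hunique⟩ := hp
  have hp_iff (i : ι) : p i ↔ i = i₀ := ⟨hunique i, fun h => h ▸ hi₀⟩
  have hterm (i : ι) : b ^ (if p i then 1 else 0) = 1 + if i = i₀ then b - 1 else 0 := by
    rw [hp_iff]; split_ifs <;> simp
  simp only [hterm, sum_add_distrib, sum_ite_eq', mem_univ, if_true, sum_const, card_univ,
    nsmul_one]
  abel

namespace PPerm

variable {R : Type*} [CommRing R]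

theorem sum_pow_pCycleCount_extend (b : R) {D : Finset α} {x : α} (hx : x ∉ D)
    (f : {u // u ∈ D} ↪ α) :
    ∑ y : ↥(Set.range f)ᶜ, b ^ pCycleCount (extend hx f y) =
      b ^ pCycleCount (⟨D, f⟩ : PPerm α) * (b + Fintype.card α - 1 - #D) := by
  have hcard : (Fintype.card ↥(Set.range f)ᶜ : R) = Fintype.card α - #D := by
    rw [Fintype.card_compl_set, Set.card_range_of_injective f.injective, Fintype.card_coe,
      Nat.cast_sub (card_le_univ D)]
  simp only [pCycleCount_extend, pow_add, ← mul_sum]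
  rw [sum_pow_ite_of_existsUnique (existsUnique_extend_closing_cycle hx f), hcard]
  ring

theorem sum_pow_pCycleCount (b : R) (D : Finset α) :
    ∑ f : {u // u ∈ D} ↪ α, b ^ pCycleCount (⟨D, f⟩ : PPerm α) =
      (descPochhammer R #D).eval (b + Fintype.card α - 1) := by
  induction D using Finset.induction_on with
  | empty =>
    have hcount (f : {u // u ∈ (∅ : Finset α)} ↪ α) : pCycleCount (⟨∅, f⟩ : PPerm α) = 0 := by
      rw [pCycleCount_eq_ncard_cycles,
        cycles_eq_empty fun u => not_arc_of_notMem (notMem_empty u) f, Set.ncard_empty]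
    simp [hcount]
  | insert x D hx ih =>
    rw [card_insert_of_notMem hx, descPochhammer_succ_eval, ← ih, sum_mul,
      ← (embeddingInsertEquiv hx).symm.sum_comp, Fintype.sum_sigma]
    exact sum_congr rfl fun f _ => sum_pow_pCycleCount_extend b hx f

theorem sum_pow_mul_pow_pCycleCount (a b : R) :
    ∑ ψ : PPerm α, a ^ (Fintype.card α - #ψ.1) * b ^ pCycleCount ψ =
      ∑ p ∈ antidiagonal (Fintype.card α),
        (Fintype.card α).choose p.1 * (a ^ p.1 * (ascPochhammer R p.2).eval (b + p.1)) := by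
  set n := Fintype.card α with hn
  calc ∑ ψ : PPerm α, a ^ (n - #ψ.1) * b ^ pCycleCount ψ
    _ = ∑ D : Finset α, a ^ (n - #D) * (descPochhammer R #D).eval (b + n - 1) := by
      simp only [Fintype.sum_sigma, ← mul_sum, sum_pow_pCycleCount, hn]
    _ = ∑ d ∈ range (n + 1),
          n.choose d • (a ^ (n - d) * (descPochhammer R d).eval (b + n - 1)) := by
      rw [← powerset_univ, sum_powerset_apply_card
        (fun d => a ^ (n - d) * (descPochhammer R d).eval (b + n - 1)), card_univ]
    _ = ∑ p ∈ antidiagonal n,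
          n.choose p.1 • (a ^ p.2 * (descPochhammer R p.1).eval (b + n - 1)) :=
      (Nat.sum_antidiagonal_eq_sum_range_succ
        (fun d s => n.choose d • (a ^ s * (descPochhammer R d).eval (b + n - 1))) n).symm
    _ = ∑ p ∈ antidiagonal n,
          n.choose p.1 * (a ^ p.1 * (ascPochhammer R p.2).eval (b + p.1)) := by
      rw [← Nat.sum_antidiagonal_swap]
      refine sum_congr rfl fun p hp => ?_
      rw [← mem_antidiagonal.1 hp, descPochhammer_eval_eq_ascPochhammer, nsmul_eq_mul,
        Prod.fst_swap, Prod.snd_swap, Nat.choose_symm_add]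
      push_cast
      ring_nf

end PPerm

/-! ### Rising factorials and the binomial series -/

theorem hasSum_multichoose_mul_pow (c : ℝ) {z : ℝ} (hz : |z| < 1) :
    HasSum (fun m => Ring.multichoose c m * z ^ m) (1 / (1 - z) ^ c) := by
  have hball : z ∈ Metric.eball (0 : ℝ) 1 := by
    simpa [Metric.mem_eball, edist_dist, Real.dist_eq] using hz
  simpa [FormalMultilinearSeries.ofScalars_apply_eq, Ring.multichoose_eq, mul_comm]
    using (Real.one_div_one_sub_rpow_hasFPowerSeriesOnBall_zero c).hasSum hball

theorem factorial_mul_multichoose {R : Type*} [Ring R] [BinomialRing R] (c : R) (m : ℕ) :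
    m.factorial * Ring.multichoose c m = (ascPochhammer R m).eval c := by
  rw [← nsmul_eq_mul, Ring.factorial_nsmul_multichoose_eq_ascPochhammer,
    ascPochhammer_smeval_eq_eval]

section LinearOrder

variable {R : Type*} [Ring R] [LinearOrder R] {c d : R}

theorem abs_eval_ascPochhammer_le [IsOrderedRing R] (h : |c| ≤ d) (m : ℕ) :
    |(ascPochhammer R m).eval c| ≤ (ascPochhammer R m).eval d := by
  induction m with
  | zero => simp
  | succ m ih =>
    have hstep : |c + m| ≤ d + m :=
      (abs_add_le c m).trans (add_le_add h (Nat.abs_cast m).le)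
    rw [ascPochhammer_succ_eval, ascPochhammer_succ_eval, abs_mul]
    exact mul_le_mul ih hstep (abs_nonneg _) ((abs_nonneg _).trans ih)

theorem abs_multichoose_le [IsStrictOrderedRing R] [BinomialRing R] (h : |c| ≤ d) (m : ℕ) :
    |Ring.multichoose c m| ≤ Ring.multichoose d m := by
  have hfact : (0 : R) < m.factorial := by exact_mod_cast m.factorial_pos
  refine le_of_mul_le_mul_left ?_ hfact
  calc (m.factorial : R) * |Ring.multichoose c m|
    _ = |m.factorial * Ring.multichoose c m| := by rw [abs_mul, Nat.abs_cast]
    _ ≤ m.factorial * Ring.multichoose d m := by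
      simpa only [factorial_mul_multichoose] using abs_eval_ascPochhammer_le h m

end LinearOrder

/-! ### The exponential generating function -/

theorem hasSum_sum_antidiagonal {A M : Type*} [AddMonoid A] [HasAntidiagonal A]
    [AddCommMonoid M] [TopologicalSpace M] [ContinuousAdd M] [RegularSpace M]
    {f : A × A → M} {m : M} (hf : HasSum f m) :
    HasSum (fun n => ∑ p ∈ antidiagonal n, f p) m := by
  refine (HasAntidiagonal.sigmaAntidiagonalEquivProd.hasSum_iff.2 hf).sigma fun n => ?_
  exact (antidiagonal n).hasSum f

/-- The part of `p_{s+m}(a, b) z^(s+m) / (s+m)!` due to the partial permutations with `s` open paths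
and `m` arcs, where `p = (s, m)`. -/
def egfTerm (a b z : ℝ) (p : ℕ × ℕ) : ℝ :=
  (a * z) ^ p.1 / p.1.factorial * (Ring.multichoose (b + p.1) p.2 * z ^ p.2)

theorem pPoly_mul_pow_div_factorial (r : ℕ) (a b z : ℝ) :
    pPoly r a b * z ^ r / r.factorial = ∑ p ∈ antidiagonal r, egfTerm a b z p := by
  have hpoly : pPoly r a b = ∑ p ∈ antidiagonal r,
      r.choose p.1 * (a ^ p.1 * (ascPochhammer ℝ p.2).eval (b + p.1)) := by
    simpa only [pPoly, Fintype.card_fin] using PPerm.sum_pow_mul_pow_pCycleCount (α := Fin r) a b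
  rw [hpoly, sum_mul, sum_div]
  refine sum_congr rfl fun p hp => ?_
  obtain rfl : p.1 + p.2 = r := mem_antidiagonal.1 hp
  have hfact : ((p.1 + p.2).factorial : ℝ) ≠ 0 := by positivity
  rw [egfTerm, ← factorial_mul_multichoose, Nat.cast_add_choose, mul_pow, pow_add]
  field_simp

theorem hasSum_egfTerm_row (a b : ℝ) {z : ℝ} (hz : |z| < 1) (s : ℕ) :
    HasSum (fun m => egfTerm a b z (s, m))
      ((a * z / (1 - z)) ^ s / s.factorial * (1 / (1 - z) ^ b)) := by
  have hz' : 0 < 1 - z := sub_pos.2 (abs_lt.1 hz).2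
  have hb : (1 - z) ^ b ≠ 0 := (Real.rpow_pos_of_pos hz' b).ne'
  have hvalue : (a * z / (1 - z)) ^ s / s.factorial * (1 / (1 - z) ^ b) =
      (a * z) ^ s / s.factorial * (1 / (1 - z) ^ (b + s)) := by
    rw [Real.rpow_add hz', Real.rpow_natCast, div_pow]
    field_simp
  rw [hvalue]
  exact (hasSum_multichoose_mul_pow (b + s) hz).mul_left _

theorem hasSum_egfTerm_row_sums (a b z : ℝ) :
    HasSum (fun s : ℕ => (a * z / (1 - z)) ^ s / s.factorial * (1 / (1 - z) ^ b))
      (Real.exp (a * z / (1 - z)) / (1 - z) ^ b) := by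
  rw [Real.exp_eq_exp_ℝ, div_eq_mul_one_div (NormedSpace.exp (a * z / (1 - z)))]
  exact (NormedSpace.expSeries_div_hasSum_exp (a * z / (1 - z))).mul_right (1 / (1 - z) ^ b)

theorem norm_egfTerm_le (a b z : ℝ) (p : ℕ × ℕ) : ‖egfTerm a b z p‖ ≤ egfTerm |a| |b| |z| p := by
  have hb : |b + p.1| ≤ |b| + p.1 := by simpa using abs_add_le b p.1
  rw [Real.norm_eq_abs, egfTerm, egfTerm]
  simp only [abs_mul, abs_div, abs_pow, Nat.abs_cast]
  gcongr
  exact abs_multichoose_le hb p.2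

theorem summable_egfTerm (a b : ℝ) {z : ℝ} (hz : |z| < 1) : Summable (egfTerm a b z) := by
  have hz' : |(|z|)| < 1 := by rwa [abs_abs]
  have hnonneg : 0 ≤ egfTerm |a| |b| |z| := fun p =>
    (norm_nonneg _).trans (norm_egfTerm_le a b z p)
  refine .of_norm_bounded ((summable_prod_of_nonneg hnonneg).2 ⟨fun s => ?_, ?_⟩)
    (norm_egfTerm_le a b z)
  · exact (hasSum_egfTerm_row |a| |b| hz' s).summable
  · simp only [(hasSum_egfTerm_row |a| |b| hz' _).tsum_eq]
    exact (hasSum_egfTerm_row_sums |a| |b| |z|).summable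

theorem hasSum_egfTerm (a b : ℝ) {z : ℝ} (hz : |z| < 1) :
    HasSum (egfTerm a b z) (Real.exp (a * z / (1 - z)) / (1 - z) ^ b) := by
  have hsum := (summable_egfTerm a b hz).hasSum
  have hrows := hsum.prod_fiberwise (hasSum_egfTerm_row a b hz)
  rwa [hrows.unique (hasSum_egfTerm_row_sums a b z)] at hsum

/-- Exponential generating function for `p_r(α,β)`:
`Σ_{r≥0} p_r(α,β) z^r / r! = exp(αz/(1-z)) / (1-z)^β`. -/
theorem pPoly_egf (a b : ℝ) :
    ∀ z : ℝ, |z| < 1 →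
      ∑' r : ℕ, pPoly r a b * z ^ r / (r.factorial : ℝ)
        = Real.exp (a * z / (1 - z)) / (1 - z) ^ b := by
  intro z hz
  have hegf : HasSum (fun r => pPoly r a b * z ^ r / (r.factorial : ℝ))
      (Real.exp (a * z / (1 - z)) / (1 - z) ^ b) := by
    simp only [pPoly_mul_pow_div_factorial]
    exact hasSum_sum_antidiagonal (hasSum_egfTerm a b hz)
  exact hegf.tsum_eq
end
end
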